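/- Let C be a minor-closed class of finite simple graphs all of whose members have acyclic chromatic number at most x. Then every G in C satisfies f_2(G) ≤ C(x,2)·(3·C(x,2)+1) if x ≤ 9, and f_2(G) ≤ C(x,2)·(12x+1) if x ≥ 9, where C(x,2) is the binomial coefficient (x choose 2). -/

import Mathlib

open scoped Classical

namespace InducedArboricity

/-- The edges of the subgraph of `G` induced by vertex set `S`, viewed as edges of `G`. -/
def forestEdges {V : Type*} (G : SimpleGraph V) (S : Set V) : Set (Sym2 V) :=
  {e | e ∈ G.edgeSet ∧ ∀ x ∈ e, x ∈ S}

/-- The number of edges of the connected component of `v` in `H`. -/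
noncomputable def compEdgeCount {W : Type*} (H : SimpleGraph W) (v : W) : ℕ :=
  {e | e ∈ H.edgeSet ∧ ∀ x ∈ e, H.Reachable v x}.ncard

/-- `S` induces a `k`-strong forest in `G`: the induced subgraph is acyclic and each of its
connected components has at least `k` edges. -/
def IsStrongForest {V : Type*} (G : SimpleGraph V) (k : ℕ) (S : Set V) : Prop :=
  (G.induce S).IsAcyclic ∧ ∀ v : S, k ≤ compEdgeCount (G.induce S) v

/-- An edge `e` of `G` is `k`-valid if it lies in some `k`-strong forest of `G`. -/
def KValid {V : Type*} (G : SimpleGraph V) (k : ℕ) (e : Sym2 V) : Prop :=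
  ∃ S : Set V, IsStrongForest G k S ∧ e ∈ forestEdges G S

/-- The `k`-strong induced arboricity: the least number of `k`-strong forests of `G`
covering all `k`-valid edges of `G`. -/
noncomputable def fStrong {V : Type*} (G : SimpleGraph V) (k : ℕ) : ℕ :=
  sInf {N | ∃ F : Fin N → Set V,
    (∀ i, IsStrongForest G k (F i)) ∧
    ∀ e : Sym2 V, KValid G k e → ∃ i, e ∈ forestEdges G (F i)}

/-- `G` is a `d`-shallow minor of `H`. -/
def IsShallowMinor {V W : Type*} (d : ℕ) (G : SimpleGraph V) (H : SimpleGraph W) : Prop :=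
  ∃ B : V → Set W,
    Pairwise (Function.onFun Disjoint B) ∧
    (∀ v, ∃ c : B v, ∀ y : B v,
      (H.induce (B v)).Reachable c y ∧ (H.induce (B v)).dist c y ≤ d) ∧
    (∀ u v, G.Adj u v → ∃ x ∈ B u, ∃ y ∈ B v, H.Adj x y)

/-- A class of finite simple graphs, one set of graphs for each number of vertices. -/
def GraphClass : Type :=
  ∀ n : ℕ, Set (SimpleGraph (Fin n))

/-- A class of graphs has bounded expansion if for every `d` there is a constant `a` such that
every `d`-shallow minor of a member of the class has at most `a` times as many edges
as vertices. -/
def BoundedExpansion (C : GraphClass) : Prop :=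
  ∀ d : ℕ, ∃ a : ℕ, ∀ (m : ℕ) (G : SimpleGraph (Fin m)),
    (∃ n : ℕ, ∃ H ∈ C n, IsShallowMinor d G H) → G.edgeSet.ncard ≤ a * m

/-- A class of graphs is nowhere dense if for every `d` some graph is not a `d`-shallow minor
of any member of the class. -/
def NowhereDense (C : GraphClass) : Prop :=
  ∀ d : ℕ, ∃ (m : ℕ) (G : SimpleGraph (Fin m)), ¬ ∃ n : ℕ, ∃ H ∈ C n, IsShallowMinor d G H

/-- The closed neighborhood of `v` in `G`. -/
def closedNbr {V : Type*} (G : SimpleGraph V) (v : V) : Set V :=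
  insert v (G.neighborSet v)

/-- The sum of the labels over the closed neighborhood of `v`. -/
noncomputable def closedNbrSum {V : Type*} [Fintype V] (G : SimpleGraph V)
    (f : V → ℕ) (v : V) : ℕ :=
  ∑ x : V, if x ∈ closedNbr G v then f x else 0

/-- A labeling is distinguishing if adjacent vertices with different closed neighborhoods
receive different label sums over their closed neighborhoods. -/
def Distinguishing {V : Type*} [Fintype V] (G : SimpleGraph V) (f : V → ℕ) : Prop :=
  ∀ u v : V, G.Adj u v → closedNbr G u ≠ closedNbr G v →
    closedNbrSum G f u ≠ closedNbrSum G f v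

/-- The adjacent closed vertex-distinguishing number of `G`. -/
noncomputable def disNumber {V : Type*} [Fintype V] (G : SimpleGraph V) : ℕ :=
  sInf {L | 1 ≤ L ∧ ∃ f : V → ℕ, (∀ v, 1 ≤ f v ∧ f v ≤ L) ∧ Distinguishing G f}

/-- A proper coloring in which any two color classes together induce a forest. -/
def IsAcyclicColoring {V : Type*} (G : SimpleGraph V) {m : ℕ} (c : V → Fin m) : Prop :=
  (∀ u v : V, G.Adj u v → c u ≠ c v) ∧
  ∀ i j : Fin m, (G.induce {v | c v = i ∨ c v = j}).IsAcyclic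

/-- The acyclic chromatic number of `G`. -/
noncomputable def chiAcyc {V : Type*} (G : SimpleGraph V) : ℕ :=
  sInf {m | ∃ c : V → Fin m, IsAcyclicColoring G c}

/-- The edge arboricity of `G`: the least number of (not necessarily induced) forests
covering all edges of `G`. -/
noncomputable def arboricity {V : Type*} (G : SimpleGraph V) : ℕ :=
  sInf {N | ∃ F : Fin N → SimpleGraph V,
    (∀ i, F i ≤ G ∧ (F i).IsAcyclic) ∧
    ∀ e ∈ G.edgeSet, ∃ i, e ∈ (F i).edgeSet}

/-- `G` admits a tree decomposition of width at most `t`. -/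
def HasTreewidthAtMost {V : Type*} (G : SimpleGraph V) (t : ℕ) : Prop :=
  ∃ (ι : Type) (T : SimpleGraph ι) (B : ι → Finset V),
    T.IsTree ∧
    (∀ e ∈ G.edgeSet, ∃ i, ∀ x ∈ e, x ∈ B i) ∧
    (∀ v : V, (T.induce {i | v ∈ B i}).Connected) ∧
    (∀ i, (B i).card ≤ t + 1)

/-- The tree-width of `G`. -/
noncomputable def treewidth {V : Type*} (G : SimpleGraph V) : ℕ :=
  sInf {t | HasTreewidthAtMost G t}

/-- `G` has tree-depth at most `d`: there is a "forest order" on the vertices (the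
ancestor order of a rooted spanning forest) in which ancestor sets are chains of at most
`d` vertices and endpoints of edges of `G` are comparable.  Equivalently, every connected
component of `G` is a subgraph of the transitive closure of a rooted tree of depth `d`. -/
def HasTreedepthAtMost {V : Type*} (G : SimpleGraph V) (d : ℕ) : Prop :=
  ∃ le : V → V → Prop, IsPartialOrder V le ∧
    (∀ v : V, IsChain le {u | le u v}) ∧
    (∀ u v : V, G.Adj u v → le u v ∨ le v u) ∧
    (∀ v : V, {u | le u v}.ncard ≤ d)

/-- The tree-depth of `G`. -/
noncomputable def treedepth {V : Type*} (G : SimpleGraph V) : ℕ :=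
  sInf {d | HasTreedepthAtMost G d}

/-- `G` is a minor of `H`, witnessed by disjoint connected branch sets. -/
def IsMinorOf {V W : Type*} (G : SimpleGraph V) (H : SimpleGraph W) : Prop :=
  ∃ B : V → Set W,
    Pairwise (Function.onFun Disjoint B) ∧
    (∀ v, (B v).Nonempty) ∧
    (∀ v, (H.induce (B v)).Connected) ∧
    (∀ u v, G.Adj u v → ∃ x ∈ B u, ∃ y ∈ B v, H.Adj x y)

/-- A class of graphs closed under taking minors. -/
def MinorClosed (C : GraphClass) : Prop :=
  ∀ (m n : ℕ) (G : SimpleGraph (Fin m)) (H : SimpleGraph (Fin n)),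
    H ∈ C n → IsMinorOf G H → G ∈ C m

/-- Planarity, via Wagner's characterization: no `K₅` and no `K₃,₃` minor. -/
def IsPlanar {V : Type*} (G : SimpleGraph V) : Prop :=
  ¬ IsMinorOf (SimpleGraph.completeGraph (Fin 5)) G ∧
  ¬ IsMinorOf (completeBipartiteGraph (Fin 3) (Fin 3)) G

/-!
Color `G` acyclically. Every edge lies in the union `S` of two color classes, which induces a
forest, so it suffices to cover the valid edges inside one such `S` by `k + 1` strong forests, where
every `2`-shallow minor of `G` is `k`-colorable. The components of `G[S]` with at least two edges
form one strong forest. The other valid edges inside `S` form an induced matching, and validity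
gives for each such edge a vertex outside `S` adjacent to exactly one of its ends. Contracting
every matching edge into its outside vertex yields a `2`-shallow minor; a proper `k`-coloring of
it splits the matching edges with their outside vertices into `k` induced forests whose components
are spiders.
-/

section StrongForest

variable {V W : Type*}

lemma compEdgeCount_le_one {H : SimpleGraph W} {u v : W} (hu : ∀ z, H.Adj u z → z = v)
    (hv : ∀ z, H.Adj v z → z = u) : compEdgeCount H u ≤ 1 := by
  have mem_of_reachable : ∀ z, H.Reachable u z → z = u ∨ z = v := by
    intro z hz
    rw [SimpleGraph.reachable_iff_reflTransGen] at hz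
    induction hz with
    | refl => exact Or.inl rfl
    | tail _ hbc ih =>
      rcases ih with rfl | rfl
      · exact Or.inr (hu _ hbc)
      · exact Or.inl (hv _ hbc)
  rw [compEdgeCount, ← Set.ncard_singleton s(u, v)]
  refine Set.ncard_le_ncard ?_ (Set.finite_singleton _)
  rintro ⟨a, b⟩ ⟨hab : H.Adj a b, hreach⟩
  rcases mem_of_reachable a (hreach a (Sym2.mem_mk_left a b)) with rfl | rfl
  · rw [hu b hab]; rfl
  · rw [hv b hab]; exact Sym2.eq_swap

lemma two_le_compEdgeCount [Finite W] {H : SimpleGraph W} {v a b c : W} (hv : H.Reachable v b)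
    (hab : H.Adj a b) (hbc : H.Adj b c) (hac : a ≠ c) : 2 ≤ compEdgeCount H v := by
  have hne : s(a, b) ≠ s(b, c) := by simp [hac, hab.ne]
  rw [compEdgeCount, ← Set.ncard_pair hne]
  refine Set.ncard_le_ncard ?_ (Set.toFinite _)
  rintro e (rfl | rfl)
  · exact ⟨hab, Sym2.ball.2 ⟨hv.trans hab.symm.reachable, hv⟩⟩
  · exact ⟨hbc, Sym2.ball.2 ⟨hv, hv.trans hbc.reachable⟩⟩

/-- `v` is a vertex of a path `a b c` with two edges all of whose vertices lie in `S`. When `G[S]`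
is a forest, this says that the component of `v` in `G[S]` has at least two edges. -/
def OnTwoEdgePath (G : SimpleGraph V) (S : Set V) (v : V) : Prop :=
  ∃ a b c, G.Adj a b ∧ G.Adj b c ∧ a ≠ c ∧ {a, b, c} ⊆ S ∧ v ∈ ({a, b, c} : Set V)

variable {G : SimpleGraph V} {S : Set V}

lemma isStrongForest_two_of_onTwoEdgePath [Finite V] (hS : (G.induce S).IsAcyclic)
    (hpath : ∀ v ∈ S, OnTwoEdgePath G S v) : IsStrongForest G 2 S := by
  refine ⟨hS, ?_⟩
  rintro ⟨v, hv⟩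
  obtain ⟨a, b, c, hab, hbc, hac, hsub, hmem⟩ := hpath v hv
  simp only [Set.insert_subset_iff, Set.singleton_subset_iff] at hsub
  obtain ⟨ha, hb, hc⟩ := hsub
  have hab' : (G.induce S).Adj ⟨a, ha⟩ ⟨b, hb⟩ := hab
  have hbc' : (G.induce S).Adj ⟨b, hb⟩ ⟨c, hc⟩ := hbc
  have hreach : (G.induce S).Reachable ⟨v, hv⟩ ⟨b, hb⟩ := by
    rcases hmem with rfl | rfl | rfl
    · exact hab'.reachable
    · exact SimpleGraph.Reachable.refl _
    · exact hbc'.symm.reachable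
  exact two_le_compEdgeCount hreach hab' hbc' fun h => hac (congrArg Subtype.val h)

lemma isStrongForest_two_setOf_onTwoEdgePath [Finite V] (hS : (G.induce S).IsAcyclic) :
    IsStrongForest G 2 {v | OnTwoEdgePath G S v} := by
  have hsub : {v | OnTwoEdgePath G S v} ⊆ S := fun v ⟨_, _, _, _, _, _, hsub, hv⟩ => hsub hv
  refine isStrongForest_two_of_onTwoEdgePath
    (hS.embedding (SimpleGraph.induceHomOfLE G hsub)) fun v hv => ?_
  obtain ⟨a, b, c, hab, hbc, hac, hsub, hmem⟩ := hv
  exact ⟨a, b, c, hab, hbc, hac, fun z hz => ⟨a, b, c, hab, hbc, hac, hsub, hz⟩, hmem⟩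

lemma IsStrongForest.exists_adj_ne (hS : IsStrongForest G 2 S) {u : V} (v : V) (hu : u ∈ S)
    (hv : v ∈ S) : ∃ z ∈ S, (G.Adj u z ∧ z ≠ v) ∨ (G.Adj v z ∧ z ≠ u) := by
  by_contra! h
  have hle : compEdgeCount (G.induce S) ⟨u, hu⟩ ≤ 1 :=
    compEdgeCount_le_one (v := ⟨v, hv⟩) (fun z hz => Subtype.ext ((h z z.2).1 hz))
      fun z hz => Subtype.ext ((h z z.2).2 hz)
  exact absurd (hS.2 ⟨u, hu⟩) (by omega)

lemma not_adj_of_induce_isAcyclic (hS : (G.induce S).IsAcyclic) {u v z : V} (hu : u ∈ S)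
    (hv : v ∈ S) (hz : z ∈ S) (huv : G.Adj u v) (huz : G.Adj u z) : ¬ G.Adj v z := by
  intro hvz
  refine hS.cliqueFree le_rfl {⟨u, hu⟩, ⟨v, hv⟩, ⟨z, hz⟩} ?_
  rw [SimpleGraph.is3Clique_triple_iff]
  exact ⟨huv, huz, hvz⟩

lemma KValid.mem_edgeSet {k : ℕ} {e : Sym2 V} (he : KValid G k e) : e ∈ G.edgeSet :=
  he.choose_spec.2.1

lemma KValid.exists_eq_mk_adj_not_adj {e : Sym2 V} (he : KValid G 2 e) :
    ∃ u v w, e = s(u, v) ∧ G.Adj u w ∧ ¬ G.Adj v w ∧ w ≠ v := by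
  obtain ⟨S, hS, heG, heS⟩ := he
  induction e with | _ u v
  have huv : G.Adj u v := heG
  have hu : u ∈ S := heS u (Sym2.mem_mk_left u v)
  have hv : v ∈ S := heS v (Sym2.mem_mk_right u v)
  obtain ⟨w, hw, ⟨huw, hne⟩ | ⟨hvw, hne⟩⟩ := hS.exists_adj_ne v hu hv
  · exact ⟨u, v, w, rfl, huw, not_adj_of_induce_isAcyclic hS.1 hu hv hw huv huw, hne⟩
  · exact ⟨v, u, w, Sym2.eq_swap, hvw,
      not_adj_of_induce_isAcyclic hS.1 hv hu hw huv.symm hvw, hne⟩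

lemma fStrong_le_card {k : ℕ} {ι : Type*} [Fintype ι] (F : ι → Set V)
    (hF : ∀ i, IsStrongForest G k (F i))
    (hcover : ∀ e, KValid G k e → ∃ i, e ∈ forestEdges G (F i)) :
    fStrong G k ≤ Fintype.card ι := by
  let φ := Fintype.equivFin ι
  refine Nat.sInf_le ⟨fun i => F (φ.symm i), fun i => hF _, fun e he => ?_⟩
  obtain ⟨i, hi⟩ := hcover e he
  exact ⟨φ i, by simpa only [φ.symm_apply_apply] using hi⟩

end StrongForest

section ParentFunction

variable {V W : Type*}

lemma isAcyclic_of_rank {α : Type*} [LinearOrder α] {H : SimpleGraph W} (r : W → α)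
    (h : ∀ v a b, H.Adj v a → H.Adj v b → r a ≤ r v → r b ≤ r v → a = b) : H.IsAcyclic := by
  -- The two neighbors on a cycle of its vertex of largest rank would coincide.
  intro u p hp
  obtain ⟨m, hm, hmax⟩ := p.support.toFinset.exists_max_image r
    ⟨u, List.mem_toFinset.2 p.start_mem_support⟩
  rw [List.mem_toFinset] at hm
  let q := p.rotate m hm
  have hq : q.IsCycle := hp.rotate hm
  have hle : ∀ z ∈ q.support, r z ≤ r m := fun z hz =>
    hmax z (List.mem_toFinset.2 ((p.mem_support_rotate_iff _ hm).1 hz))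
  exact hq.snd_ne_penultimate (h m _ _ (SimpleGraph.Walk.adj_snd hq.not_nil)
    (SimpleGraph.Walk.adj_penultimate hq.not_nil).symm
    (hle _ (q.getVert_mem_support _)) (hle _ (q.getVert_mem_support _)))

lemma isAcyclic_of_parent {H : SimpleGraph W} (p : W → W)
    (hp : ∀ z, ∃ n, Function.IsFixedPt p (p^[n] z))
    (hH : ∀ u v, H.Adj u v → p u = v ∨ p v = u) : H.IsAcyclic := by
  let r : W → ℕ := fun z => Nat.find (hp z)
  have r_parent_lt : ∀ z, p z ≠ z → r (p z) < r z := by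
    intro z hz
    have hspec : Function.IsFixedPt p (p^[r z] z) := Nat.find_spec (hp z)
    obtain ⟨n, hn⟩ : ∃ n, r z = n + 1 := Nat.exists_eq_succ_of_ne_zero fun h0 => by
      rw [h0] at hspec
      exact hz hspec
    rw [hn, Function.iterate_succ_apply] at hspec
    exact (Nat.find_min' (hp (p z)) hspec).trans_lt (by omega)
  have eq_parent : ∀ v a, H.Adj v a → r a ≤ r v → a = p v := by
    intro v a hva hle
    rcases hH v a hva with h | rfl
    · exact h.symm
    · exact absurd (r_parent_lt a hva.ne) (by omega)
  exact isAcyclic_of_rank r fun v a b ha hb hra hrb =>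
    (eq_parent v a ha hra).trans (eq_parent v b hb hrb).symm

lemma induce_isAcyclic_of_parent {G : SimpleGraph V} {S : Set V} (p : V → V)
    (hp : ∀ z, ∃ n, Function.IsFixedPt p (p^[n] z))
    (hS : ∀ u ∈ S, ∀ v ∈ S, G.Adj u v → p u = v ∨ p v = u) : (G.induce S).IsAcyclic := by
  have hforest : (SimpleGraph.fromRel fun u v => p u = v).IsAcyclic :=
    isAcyclic_of_parent p hp fun u v huv => huv.2
  refine hforest.comap ⟨Subtype.val, fun {u v} huv => ?_⟩ Subtype.val_injective
  have huv' : G.Adj u v := huv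
  exact ⟨huv'.ne, hS u u.2 v v.2 huv'⟩

lemma exists_walk_iterate_length_le {H : SimpleGraph W} {p : W → W}
    (hadj : ∀ z, p z = z ∨ H.Adj z (p z)) (n : ℕ) (z : W) :
    ∃ q : H.Walk z (p^[n] z), q.length ≤ n := by
  induction n generalizing z with
  | zero => exact ⟨SimpleGraph.Walk.nil, le_rfl⟩
  | succ n ih =>
    obtain ⟨q, hq⟩ := ih (p z)
    rcases hadj z with hz | hz
    · exact ⟨q.copy hz rfl, by simpa using hq.trans n.le_succ⟩
    · exact ⟨SimpleGraph.Walk.cons hz q, by simpa using hq⟩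

lemma isShallowMinor_map {G : SimpleGraph V} {d : ℕ} {f : V → W}
    (hf : ∀ w, ∃ c : f ⁻¹' {w}, ∀ y : f ⁻¹' {w},
      (G.induce (f ⁻¹' {w})).Reachable c y ∧ (G.induce (f ⁻¹' {w})).dist c y ≤ d) :
    IsShallowMinor d (G.map f) G := by
  refine ⟨fun w => f ⁻¹' {w}, pairwise_disjoint_fiber f, hf, ?_⟩
  rintro _ _ ⟨-, x, y, hxy, rfl, rfl⟩
  exact ⟨x, rfl, y, rfl, hxy⟩

lemma isShallowMinor_map_of_parent {G : SimpleGraph V} {d : ℕ} {p : V → V} {f : V → W}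
    (hadj : ∀ z, p z = z ∨ G.Adj z (p z)) (hf : Function.Surjective f) (hfp : ∀ z, f (p z) = f z)
    (hroot : ∀ y z, f y = f z → p^[d] y = p^[d] z) : IsShallowMinor d (G.map f) G := by
  refine isShallowMinor_map fun w => ?_
  obtain ⟨z, rfl⟩ := hf w
  have hmaps : Set.MapsTo p (f ⁻¹' {f z}) (f ⁻¹' {f z}) := fun y hy => (hfp y).trans hy
  let root : f ⁻¹' {f z} := ⟨p^[d] z, hmaps.iterate d rfl⟩
  refine ⟨root, fun y => ?_⟩
  obtain ⟨q, hq⟩ := exists_walk_iterate_length_le (H := G.induce (f ⁻¹' {f z}))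
    (p := hmaps.restrict) (fun y => (hadj y).imp Subtype.ext id) d y
  have hend : hmaps.restrict^[d] y = root :=
    Subtype.ext ((hmaps.coe_iterate_restrict y d).trans (hroot y z y.2))
  rw [← hend, SimpleGraph.dist_comm]
  exact ⟨q.reachable.symm, (SimpleGraph.dist_le q).trans hq⟩

lemma exists_coloring_eq_iff_iterate_eq [Finite V] {G : SimpleGraph V} {d k : ℕ} {p : V → V}
    (hG : ∀ (m : ℕ) (H : SimpleGraph (Fin m)), IsShallowMinor d H G → H.Colorable k)
    (hadj : ∀ z, p z = z ∨ G.Adj z (p z)) (hfix : ∀ z, Function.IsFixedPt p (p^[d] z)) :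
    ∃ D : V → Fin k, ∀ y z, G.Adj y z → (D y = D z ↔ p^[d] y = p^[d] z) := by
  let φ := Finite.equivFin (Set.range p^[d])
  let f : V → Fin _ := fun z => φ (Set.rangeFactorization p^[d] z)
  have hf : ∀ y z, f y = f z ↔ p^[d] y = p^[d] z := fun y z => by
    simp only [f, φ.apply_eq_iff_eq, Subtype.ext_iff, Set.rangeFactorization_coe]
  have hfp : ∀ z, f (p z) = f z := fun z => (hf _ _).2 <| by
    rw [← Function.iterate_succ_apply, Function.iterate_succ_apply']
    exact hfix z
  have hminor : IsShallowMinor d (G.map f) G := isShallowMinor_map_of_parent hadj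
    (φ.surjective.comp Set.rangeFactorization_surjective) hfp fun y z => (hf y z).1
  obtain ⟨c⟩ := hG _ _ hminor
  refine ⟨fun z => c (f z), fun y z hyz => ⟨fun hc => (hf y z).1 ?_, fun h => ?_⟩⟩
  · by_contra hne
    exact c.valid (SimpleGraph.map_adj_apply' hyz hne) hc
  · exact congrArg c ((hf y z).2 h)

end ParentFunction

/-- A family of paths `far i`, `near i`, `center i` of `G` with two edges, in which the edges
`near i`, `far i` form an induced matching avoiding all centers. Centers may coincide; identifying
equal centers turns the paths into spiders with legs of length two. -/
structure SpiderSystem {V : Type*} (G : SimpleGraph V) (ι : Type*) where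
  near : ι → V
  far : ι → V
  center : ι → V
  near_adj_center : ∀ i, G.Adj (near i) (center i)
  far_adj_near : ∀ i, G.Adj (far i) (near i)
  not_far_adj_center : ∀ i, ¬ G.Adj (far i) (center i)
  center_notMem : ∀ i j, center i ∉ s(near j, far j)
  eq_of_mem : ∀ i j y, y ∈ s(near i, far i) → y ∈ s(near j, far j) → i = j
  eq_of_adj : ∀ i j y z, y ∈ s(near i, far i) → z ∈ s(near j, far j) → G.Adj y z → i = j

namespace SpiderSystem

variable {V ι : Type*} {G : SimpleGraph V} (T : SpiderSystem G ι)

lemma near_injective : Function.Injective T.near := fun i j h =>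
  T.eq_of_mem i j (T.near i) (Sym2.mem_mk_left _ _) (h ▸ Sym2.mem_mk_left _ _)

lemma far_injective : Function.Injective T.far := fun i j h =>
  T.eq_of_mem i j (T.far i) (Sym2.mem_mk_right _ _) (h ▸ Sym2.mem_mk_right _ _)

lemma far_ne_near (i j : ι) : T.far i ≠ T.near j := by
  intro h
  obtain rfl := T.eq_of_mem i j (T.far i) (Sym2.mem_mk_right _ _) (h ▸ Sym2.mem_mk_left _ _)
  exact (T.far_adj_near i).ne h

lemma center_ne_near (i j : ι) : T.center i ≠ T.near j := fun h =>
  T.center_notMem i j (h ▸ Sym2.mem_mk_left _ _)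

lemma center_ne_far (i j : ι) : T.center i ≠ T.far j := fun h =>
  T.center_notMem i j (h ▸ Sym2.mem_mk_right _ _)

/-- The parent function of the spiders rooted at their centers; vertices that are neither near nor
far are their own parents. -/
noncomputable def parent : V → V :=
  Function.extend T.far T.near (Function.extend T.near T.center id)

lemma parent_far (i : ι) : T.parent (T.far i) = T.near i :=
  T.far_injective.extend_apply _ _ i

lemma parent_near (i : ι) : T.parent (T.near i) = T.center i := by
  rw [parent, Function.extend_apply' _ _ _ fun ⟨j, hj⟩ => T.far_ne_near j i hj,
    T.near_injective.extend_apply]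

lemma parent_eq_self {z : V} (hnear : ∀ i, T.near i ≠ z) (hfar : ∀ i, T.far i ≠ z) :
    T.parent z = z := by
  rw [parent, Function.extend_apply' _ _ _ fun ⟨i, hi⟩ => hfar i hi,
    Function.extend_apply' _ _ _ fun ⟨i, hi⟩ => hnear i hi, id]

lemma parent_center (i : ι) : T.parent (T.center i) = T.center i :=
  T.parent_eq_self (fun j => (T.center_ne_near i j).symm) fun j => (T.center_ne_far i j).symm

lemma eq_near_or_eq_far_or_parent_eq_self (z : V) :
    (∃ i, z = T.near i) ∨ (∃ i, z = T.far i) ∨ T.parent z = z := by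
  by_contra! h
  exact h.2.2 (T.parent_eq_self (fun i => (h.1 i).symm) fun i => (h.2.1 i).symm)

lemma parent_eq_self_or_adj (z : V) : T.parent z = z ∨ G.Adj z (T.parent z) := by
  rcases T.eq_near_or_eq_far_or_parent_eq_self z with ⟨i, rfl⟩ | ⟨i, rfl⟩ | hz
  · exact Or.inr (T.parent_near i ▸ T.near_adj_center i)
  · exact Or.inr (T.parent_far i ▸ T.far_adj_near i)
  · exact Or.inl hz

lemma isFixedPt_parent_iterate_two (z : V) :
    Function.IsFixedPt T.parent (T.parent^[2] z) := by
  rcases T.eq_near_or_eq_far_or_parent_eq_self z with ⟨i, rfl⟩ | ⟨i, rfl⟩ | hz <;>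
    simp_all [Function.IsFixedPt, parent_far, parent_near, parent_center]

/-- The vertex set of the `i`-th path. -/
def support (i : ι) : Set V := {T.far i, T.near i, T.center i}

lemma parent_iterate_two_of_mem_support {i : ι} {z : V} (hz : z ∈ T.support i) :
    T.parent^[2] z = T.center i := by
  rcases hz with rfl | rfl | rfl <;> simp [parent_far, parent_near, parent_center]

lemma parent_eq_or_parent_eq_of_adj {i j : ι} {y z : V} (hy : y ∈ T.support i)
    (hz : z ∈ T.support j) (hyz : G.Adj y z) (hij : T.center i = T.center j) :
    T.parent y = z ∨ T.parent z = y := by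
  rcases hy with rfl | rfl | rfl <;> rcases hz with rfl | rfl | rfl
  · obtain rfl := T.eq_of_adj i j _ _ (Sym2.mem_mk_right _ _) (Sym2.mem_mk_right _ _) hyz
    exact absurd rfl hyz.ne
  · obtain rfl := T.eq_of_adj i j _ _ (Sym2.mem_mk_right _ _) (Sym2.mem_mk_left _ _) hyz
    exact Or.inl (T.parent_far i)
  · exact absurd (hij ▸ hyz) (T.not_far_adj_center i)
  · obtain rfl := T.eq_of_adj i j _ _ (Sym2.mem_mk_left _ _) (Sym2.mem_mk_right _ _) hyz
    exact Or.inr (T.parent_far i)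
  · obtain rfl := T.eq_of_adj i j _ _ (Sym2.mem_mk_left _ _) (Sym2.mem_mk_left _ _) hyz
    exact absurd rfl hyz.ne
  · exact Or.inl ((T.parent_near i).trans hij)
  · exact absurd (hij ▸ hyz.symm) (T.not_far_adj_center j)
  · exact Or.inr ((T.parent_near j).trans hij.symm)
  · exact absurd hij hyz.ne

lemma exists_strongForest_cover [Finite V] {k : ℕ}
    (hG : ∀ (m : ℕ) (H : SimpleGraph (Fin m)), IsShallowMinor 2 H G → H.Colorable k) :
    ∃ F : Fin k → Set V, (∀ c, IsStrongForest G 2 (F c)) ∧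
      ∀ i, ∃ c, s(T.near i, T.far i) ∈ forestEdges G (F c) := by
  obtain ⟨D, hD⟩ := exists_coloring_eq_iff_iterate_eq hG T.parent_eq_self_or_adj
    T.isFixedPt_parent_iterate_two
  have hroot : ∀ i, ∀ y ∈ T.support i, ∀ z ∈ T.support i, T.parent^[2] y = T.parent^[2] z :=
    fun i y hy z hz => (T.parent_iterate_two_of_mem_support hy).trans
      (T.parent_iterate_two_of_mem_support hz).symm
  have hmono : ∀ i, ∀ z ∈ T.support i, D z = D (T.near i) := by
    rintro i _ (rfl | rfl | rfl)
    · exact (hD _ _ (T.far_adj_near i)).2 (hroot i _ (by simp [support]) _ (by simp [support]))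
    · rfl
    · exact (hD _ _ (T.near_adj_center i).symm).2
        (hroot i _ (by simp [support]) _ (by simp [support]))
  let F : Fin k → Set V := fun c => {z | ∃ i, D (T.near i) = c ∧ z ∈ T.support i}
  have support_subset : ∀ i, T.support i ⊆ F (D (T.near i)) := fun i z hz => ⟨i, rfl, hz⟩
  refine ⟨F, fun c => isStrongForest_two_of_onTwoEdgePath ?_ ?_, fun i => ⟨D (T.near i), ?_⟩⟩
  · refine induce_isAcyclic_of_parent T.parent (fun z => ⟨2, T.isFixedPt_parent_iterate_two z⟩) ?_
    rintro y ⟨i, rfl, hy⟩ z ⟨j, hj, hz⟩ hyz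
    have hDyz : D y = D z := (hmono i y hy).trans (hj.symm.trans (hmono j z hz).symm)
    refine T.parent_eq_or_parent_eq_of_adj hy hz hyz ?_
    rw [← T.parent_iterate_two_of_mem_support hy, ← T.parent_iterate_two_of_mem_support hz]
    exact (hD y z hyz).1 hDyz
  · rintro v ⟨i, rfl, hv⟩
    exact ⟨T.far i, T.near i, T.center i, T.far_adj_near i, T.near_adj_center i,
      (T.center_ne_far i i).symm, support_subset i, hv⟩
  · exact ⟨(T.far_adj_near i).symm, Sym2.ball.2 ⟨support_subset i (by simp [support]),
      support_subset i (by simp [support])⟩⟩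

end SpiderSystem

section Covering

variable {V : Type*} {G : SimpleGraph V} {S : Set V}

/-- The edge `e` is a connected component of `G[S]`. -/
def IsIsolatedEdge (G : SimpleGraph V) (S : Set V) (e : Sym2 V) : Prop :=
  e ∈ forestEdges G S ∧ ∀ y ∈ e, ∀ z ∈ S, G.Adj y z → z ∈ e

lemma IsIsolatedEdge.eq_of_mem {e f : Sym2 V} (he : IsIsolatedEdge G S e)
    (hf : IsIsolatedEdge G S f) {y : V} (hye : y ∈ e) (hyf : y ∈ f) : e = f := by
  obtain ⟨z, rfl⟩ := hyf
  have hyz : G.Adj y z := hf.1.1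
  have hze : z ∈ e := he.2 y hye z (hf.1.2 z (Sym2.mem_mk_right y z)) hyz
  exact (Sym2.mem_and_mem_iff hyz.ne).1 ⟨hye, hze⟩

lemma IsIsolatedEdge.eq_of_adj {e f : Sym2 V} (he : IsIsolatedEdge G S e)
    (hf : IsIsolatedEdge G S f) {y z : V} (hye : y ∈ e) (hzf : z ∈ f) (hyz : G.Adj y z) : e = f :=
  he.eq_of_mem hf (he.2 y hye z (hf.1.2 z hzf) hyz) hzf

lemma exists_spiderSystem_isolatedEdge (G : SimpleGraph V) (S : Set V) :
    ∃ T : SpiderSystem G {e // IsIsolatedEdge G S e ∧ KValid G 2 e},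
      ∀ e, e.1 = s(T.near e, T.far e) := by
  choose near far center heq hadj hnadj hne using
    fun e : {e // IsIsolatedEdge G S e ∧ KValid G 2 e} => e.2.2.exists_eq_mk_adj_not_adj
  have near_mem : ∀ e, near e ∈ e.1 := fun e => heq e ▸ Sym2.mem_mk_left _ _
  have center_notMem : ∀ e, center e ∉ S := by
    intro e he
    have hmem : center e ∈ e.1 := e.2.1.2 (near e) (near_mem e) _ he (hadj e)
    rw [heq e, Sym2.mem_iff] at hmem
    exact hmem.elim (hadj e).ne' (hne e)
  refine ⟨⟨near, far, center, hadj, fun e => ?_, hnadj, fun e f hmem => ?_,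
    fun e f y hy hz => ?_, fun e f y z hy hz hyz => ?_⟩, heq⟩
  · have h : s(near e, far e) ∈ G.edgeSet := heq e ▸ e.2.1.1.1
    exact h.symm
  · rw [← heq f] at hmem
    exact center_notMem e (f.2.1.1.2 _ hmem)
  · rw [← heq] at hy hz
    exact Subtype.ext (e.2.1.eq_of_mem f.2.1 hy hz)
  · rw [← heq] at hy hz
    exact Subtype.ext (e.2.1.eq_of_adj f.2.1 hy hz hyz)

lemma onTwoEdgePath_of_not_isIsolatedEdge {e : Sym2 V} (he : e ∈ forestEdges G S)
    (hiso : ¬ IsIsolatedEdge G S e) {y : V} (hy : y ∈ e) : OnTwoEdgePath G S y := by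
  obtain ⟨v, hv, z, hz, hvz, hze⟩ : ∃ v ∈ e, ∃ z ∈ S, G.Adj v z ∧ z ∉ e := by
    by_contra! h
    exact hiso ⟨he, h⟩
  obtain ⟨u, rfl⟩ := hv
  have hvu : G.Adj v u := he.1
  refine ⟨u, v, z, hvu.symm, hvz, fun h => hze (h ▸ Sym2.mem_mk_right v u), ?_, ?_⟩
  · simp only [Set.insert_subset_iff, Set.singleton_subset_iff]
    exact ⟨he.2 u (Sym2.mem_mk_right v u), he.2 v (Sym2.mem_mk_left v u), hz⟩
  · rcases Sym2.mem_iff.1 hy with rfl | rfl <;> simp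

lemma exists_strongForest_cover_of_isAcyclic [Finite V] {k : ℕ}
    (hG : ∀ (m : ℕ) (H : SimpleGraph (Fin m)), IsShallowMinor 2 H G → H.Colorable k)
    (hS : (G.induce S).IsAcyclic) :
    ∃ F : Option (Fin k) → Set V, (∀ c, IsStrongForest G 2 (F c)) ∧
      ∀ e, KValid G 2 e → e ∈ forestEdges G S → ∃ c, e ∈ forestEdges G (F c) := by
  obtain ⟨T, hT⟩ := exists_spiderSystem_isolatedEdge G S
  obtain ⟨F, hF, hcover⟩ := T.exists_strongForest_cover hG
  refine ⟨fun c => c.elim {v | OnTwoEdgePath G S v} F, ?_, fun e hvalid he => ?_⟩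
  · rintro (_ | c)
    · exact isStrongForest_two_setOf_onTwoEdgePath hS
    · exact hF c
  · by_cases hiso : IsIsolatedEdge G S e
    · obtain ⟨c, hc⟩ := hcover ⟨e, hiso, hvalid⟩
      rw [← hT] at hc
      exact ⟨some c, hc⟩
    · exact ⟨none, he.1, fun y hy => onTwoEdgePath_of_not_isIsolatedEdge he hiso hy⟩

end Covering

section AcyclicColoring

variable {V : Type*}

lemma isAcyclicColoring_of_injective (G : SimpleGraph V) {m : ℕ} {c : V → Fin m}
    (hc : Function.Injective c) : IsAcyclicColoring G c := by
  refine ⟨fun u v huv h => huv.ne (hc h), fun i j => SimpleGraph.IsAcyclic.of_card_le_two ?_⟩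
  have himage : c '' {v | c v = i ∨ c v = j} ⊆ {i, j} := by
    rintro _ ⟨v, hv, rfl⟩
    exact hv
  calc ENat.card {v | c v = i ∨ c v = j}
      = (c '' {v | c v = i ∨ c v = j}).encard := by
        rw [ENat.card_coe_set_eq, hc.encard_image]
    _ ≤ ({i, j} : Set (Fin m)).encard := Set.encard_le_encard himage
    _ ≤ ({j} : Set (Fin m)).encard + 1 := Set.encard_insert_le _ _
    _ = 2 := by rw [Set.encard_singleton, one_add_one_eq_two]

lemma exists_isAcyclicColoring_chiAcyc [Finite V] (G : SimpleGraph V) :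
    ∃ c : V → Fin (chiAcyc G), IsAcyclicColoring G c :=
  Nat.sInf_mem (s := {m | ∃ c : V → Fin m, IsAcyclicColoring G c})
    ⟨_, _, isAcyclicColoring_of_injective G (Finite.equivFin V).injective⟩

lemma colorable_chiAcyc [Finite V] (G : SimpleGraph V) : G.Colorable (chiAcyc G) :=
  let ⟨c, hc⟩ := exists_isAcyclicColoring_chiAcyc G
  ⟨SimpleGraph.Coloring.mk c fun {u v} huv => hc.1 u v huv⟩

variable {G : SimpleGraph V} {m : ℕ} {c : V → Fin m}

lemma IsAcyclicColoring.induce_isAcyclic (hc : IsAcyclicColoring G c)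
    (s : Set.powersetCard (Fin m) 2) : (G.induce {v | c v ∈ s.1}).IsAcyclic := by
  obtain ⟨i, j, -, hs⟩ := Finset.card_eq_two.1 s.2
  have hpair : {v | c v ∈ s.1} = {v | c v = i ∨ c v = j} := by
    ext v
    simp [hs]
  rw [hpair]
  exact hc.2 i j

lemma IsAcyclicColoring.exists_mem_forestEdges (hc : IsAcyclicColoring G c) {e : Sym2 V}
    (he : e ∈ G.edgeSet) :
    ∃ s : Set.powersetCard (Fin m) 2, e ∈ forestEdges G {v | c v ∈ s.1} := by
  induction e with | _ u v
  exact ⟨⟨{c u, c v}, Finset.card_pair (hc.1 u v he)⟩, he, Sym2.ball.2 (by simp)⟩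

end AcyclicColoring

lemma IsShallowMinor.isMinorOf {V W : Type*} {d : ℕ} {G : SimpleGraph V} {H : SimpleGraph W}
    (h : IsShallowMinor d G H) : IsMinorOf G H := by
  obtain ⟨B, hdisj, hcenter, hadj⟩ := h
  refine ⟨B, hdisj, fun v => ?_, fun v => ?_, hadj⟩
  · obtain ⟨c, -⟩ := hcenter v
    exact ⟨c, c.2⟩
  · obtain ⟨c, hc⟩ := hcenter v
    exact (SimpleGraph.connected_iff_exists_forall_reachable _).2 ⟨c, fun y => (hc y).1⟩

lemma choose_two_mul_succ_le (x : ℕ) :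
    x.choose 2 * (x + 1) ≤ x.choose 2 * (3 * x.choose 2 + 1) := by
  rcases Nat.lt_or_ge x 2 with hx | hx
  · simp [Nat.choose_eq_zero_of_lt hx]
  · obtain ⟨y, rfl⟩ := Nat.exists_eq_add_of_le' hx
    have hchoose : (y + 2).choose 2 = (y + 1) + (y + 1).choose 2 := by
      rw [Nat.choose_succ_succ' (y + 1) 1, Nat.choose_one_right]
    exact Nat.mul_le_mul_left _ (by omega)

theorem fStrong_two_le_of_minorClosed_general {V : Type*} [Finite V] (G : SimpleGraph V) (k : ℕ)
    (hG : ∀ (m : ℕ) (H : SimpleGraph (Fin m)), IsShallowMinor 2 H G → H.Colorable k) :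
    fStrong G 2 ≤ (chiAcyc G).choose 2 * (k + 1) := by
  obtain ⟨c, hc⟩ := exists_isAcyclicColoring_chiAcyc G
  choose F hF hcover using fun s =>
    exists_strongForest_cover_of_isAcyclic hG (hc.induce_isAcyclic s)
  have hle := fStrong_le_card
    (fun i : Set.powersetCard (Fin (chiAcyc G)) 2 × Option (Fin k) => F i.1 i.2)
    (fun i => hF i.1 i.2) fun e he => by
      obtain ⟨s, hs⟩ := hc.exists_mem_forestEdges he.mem_edgeSet
      obtain ⟨i, hi⟩ := hcover s e he hs
      exact ⟨(s, i), hi⟩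
  rwa [Fintype.card_prod, ← Nat.card_eq_fintype_card, Set.powersetCard.card, Nat.card_fin,
    Fintype.card_option, Fintype.card_fin] at hle

/-- Let `C` be a minor-closed class of finite simple graphs all of whose
members have acyclic chromatic number at most `x`.  Then every `G ∈ C` satisfies
`f₂(G) ≤ (x choose 2) * (3 * (x choose 2) + 1)` if `x ≤ 9`, and
`f₂(G) ≤ (x choose 2) * (12x + 1)` if `x ≥ 9`. -/
theorem fStrong_two_le_of_minorClosed (C : GraphClass) (hMC : MinorClosed C) (x : ℕ)
    (hx : ∀ (n : ℕ), ∀ G ∈ C n, chiAcyc G ≤ x) :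
    ∀ (n : ℕ), ∀ G ∈ C n,
      (x ≤ 9 → fStrong G 2 ≤ x.choose 2 * (3 * x.choose 2 + 1)) ∧
      (9 ≤ x → fStrong G 2 ≤ x.choose 2 * (12 * x + 1)) := by
  intro n G hG
  have h : fStrong G 2 ≤ x.choose 2 * (x + 1) :=
    (fStrong_two_le_of_minorClosed_general G x fun m H hH =>
      (colorable_chiAcyc H).mono (hx m H (hMC m n H G hG hH.isMinorOf))).trans
      (Nat.mul_le_mul_right _ (Nat.choose_le_choose 2 (hx n G hG)))
  exact ⟨fun _ => h.trans (choose_two_mul_succ_le x),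
    fun _ => h.trans (Nat.mul_le_mul_left _ (by omega))⟩

end InducedArboricity
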